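/- arXiv:2205.03851 — 2 statements merged into one kernel-verified Lean document; each statement's English description precedes it below -/
import Mathlib

section
/- Fix integers m ≥ 1, n ≥ 3, and N ≥ 1. Then there exists N'₀ ∈ ℕ such that for every integer N' ≥ N'₀ and every vector p = (p_{i,j}) of positive reals summing to 1, Δ_p(N, N') < 0; that is, for sufficiently large aggregated sample size N', the estimator p̂ (which incorporates the aggregated data) dominates the estimator p̃ under entropy loss. -/
open Finset

/-- Binomial(N, q) probability mass function at `x`. -/
noncomputable def binPMF (N : ℕ) (q : ℝ) (x : ℕ) : ℝ :=
  (N.choose x : ℝ) * q ^ x * (1 - q) ^ (N - x)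

/-- The entropy loss `L(d, p) = ∑ᵢ ∑ⱼ pᵢⱼ log (pᵢⱼ / dᵢⱼ)`. -/
noncomputable def entropyLoss {m n : ℕ} (d p : Fin (m+1) → Fin (n+1) → ℝ) : ℝ :=
  ∑ i, ∑ j, p i j * Real.log (p i j / d i j)

/-- Support of the Multinomial(N, p) distribution on (1+m)(1+n) cells. -/
def suppX (m n N : ℕ) : Finset (Fin (m+1) → Fin (n+1) → Fin (N+1)) :=
  Finset.univ.filter fun x => ∑ i, ∑ j, (x i j : ℕ) = N

/-- Support of the Multinomial(N', p·) distribution on 1+m cells. -/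
def suppY (m N' : ℕ) : Finset (Fin (m+1) → Fin (N'+1)) :=
  Finset.univ.filter fun y => ∑ i, (y i : ℕ) = N'

/-- Multinomial(N, p) probability of the outcome `x`. -/
noncomputable def wX {m n N : ℕ} (p : Fin (m+1) → Fin (n+1) → ℝ)
    (x : Fin (m+1) → Fin (n+1) → Fin (N+1)) : ℝ :=
  (Nat.multinomial Finset.univ (fun k : Fin (m+1) × Fin (n+1) => (x k.1 k.2 : ℕ)) : ℝ) *
    ∏ i, ∏ j, p i j ^ (x i j : ℕ)

/-- Multinomial(N', (pᵢ.)ᵢ) probability of the outcome `y`, where `pᵢ. = ∑ⱼ pᵢⱼ`. -/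
noncomputable def wY {m n N' : ℕ} (p : Fin (m+1) → Fin (n+1) → ℝ)
    (y : Fin (m+1) → Fin (N'+1)) : ℝ :=
  (Nat.multinomial Finset.univ (fun i => (y i : ℕ)) : ℝ) *
    ∏ i, (∑ j, p i j) ^ (y i : ℕ)

/-- The estimator `p̃` based on the direct observations only. -/
noncomputable def ptilde {m n N : ℕ} (x : Fin (m+1) → Fin (n+1) → Fin (N+1)) :
    Fin (m+1) → Fin (n+1) → ℝ :=
  fun i j => ((x i j : ℝ) + 1/2) / ((N : ℝ) + (1 + m) * (1 + n) / 2)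

/-- The estimator `p̂` based on the direct and aggregated observations. -/
noncomputable def phat {m n N N' : ℕ} (x : Fin (m+1) → Fin (n+1) → Fin (N+1))
    (y : Fin (m+1) → Fin (N'+1)) : Fin (m+1) → Fin (n+1) → ℝ :=
  fun i j =>
    ((((∑ j', (x i j' : ℕ)) : ℕ) : ℝ) + (y i : ℝ) + (1 + n) / 2) /
        ((N : ℝ) + (N' : ℝ) + (1 + m) * (1 + n) / 2) *
      (((x i j : ℝ) + 1/2) / ((((∑ j', (x i j' : ℕ)) : ℕ) : ℝ) + (1 + n) / 2))

/-- The risk difference `Δ_p(N, N') = E_p[L(p̂, p)] − E_p[L(p̃, p)]`, the expectation being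
a finite sum over the supports of the independent multinomial observations. -/
noncomputable def riskDiff (m n : ℕ) (p : Fin (m+1) → Fin (n+1) → ℝ) (N N' : ℕ) : ℝ :=
  ∑ x ∈ suppX m n N, ∑ y ∈ suppY m N',
    wX p x * wY p y * (entropyLoss (phat x y) p - entropyLoss (ptilde x) p)

lemma marg {κ : Type*} [Fintype κ] [DecidableEq κ] (p : κ → ℝ) (S : Finset κ) (N : ℕ)
    (f : ℕ → ℝ) :
    ∑ x ∈ piAntidiag (univ : Finset κ) N,
      (Nat.multinomial univ x : ℝ) * (∏ k, p k ^ x k) * f (∑ k ∈ S, x k)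
    = ∑ z ∈ range (N+1), (N.choose z : ℝ) * (∑ k ∈ S, p k) ^ z * (∑ k ∈ Sᶜ, p k) ^ (N - z) * f z := by
  classical
  let l : Polynomial ℝ →ₗ[ℝ] ℝ := (Polynomial.basisMonomials ℝ).constr ℝ f
  have hl : ∀ (c : ℝ) (k : ℕ), l (Polynomial.C c * Polynomial.X ^ k) = c * f k := by
    intro c k
    have h1 : (Polynomial.C c * Polynomial.X ^ k : Polynomial ℝ)
        = c • (Polynomial.basisMonomials ℝ) k := by
      rw [Polynomial.coe_basisMonomials, Polynomial.C_mul_X_pow_eq_monomial,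
        Polynomial.smul_monomial]; simp
    rw [h1, map_smul, Module.Basis.constr_basis]; rfl
  let g : κ → Polynomial ℝ := fun k =>
    Polynomial.C (p k) * Polynomial.X ^ (if k ∈ S then 1 else 0)
  have hA : (∑ k, g k) ^ N = ∑ x ∈ piAntidiag (univ : Finset κ) N,
      Polynomial.C ((Nat.multinomial univ x : ℝ) * (∏ k, p k ^ x k))
        * Polynomial.X ^ (∑ k ∈ S, x k) := by
    rw [Finset.sum_pow_eq_sum_piAntidiag]
    refine sum_congr rfl fun x _ => ?_
    have : ∏ k, g k ^ x k = Polynomial.C (∏ k, p k ^ x k) * Polynomial.X ^ (∑ k ∈ S, x k) := by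
      simp only [g, mul_pow, prod_mul_distrib, ← pow_mul, prod_pow_eq_pow_sum]
      congr 1
      · simp
      · congr 1; simp [ite_mul]
    rw [this]; simp [mul_assoc]
  have hB : (∑ k, g k) ^ N = ∑ z ∈ range (N+1),
      Polynomial.C ((N.choose z : ℝ) * (∑ k ∈ S, p k) ^ z * (∑ k ∈ Sᶜ, p k) ^ (N - z))
        * Polynomial.X ^ z := by
    have : ∑ k, g k = Polynomial.C (∑ k ∈ S, p k) * Polynomial.X + Polynomial.C (∑ k ∈ Sᶜ, p k) := by
      rw [← sum_add_sum_compl S g, map_sum, map_sum, sum_mul]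
      congr 1
      · exact sum_congr rfl fun k hk => by simp [g, hk]
      · exact sum_congr rfl fun k hk => by simp [g, mem_compl.1 hk]
    rw [this, add_pow]
    refine sum_congr rfl fun z _ => ?_
    simp only [mul_pow, map_mul, map_pow, map_natCast]; ring
  have := congrArg l (hA.symm.trans hB)
  simpa only [map_sum, hl] using this

lemma suppX_sum (m n N : ℕ) (G : (Fin (m+1) × Fin (n+1) → ℕ) → ℝ) :
    ∑ x ∈ suppX m n N, G (fun k => (x k.1 k.2 : ℕ))
      = ∑ x ∈ piAntidiag (univ : Finset (Fin (m+1) × Fin (n+1))) N, G x := by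
  refine sum_bij (fun x _ k => (x k.1 k.2 : ℕ)) ?_ ?_ ?_ (fun _ _ => rfl)
  · intro x hx
    simp only [suppX, mem_filter] at hx
    simp [mem_piAntidiag, Fintype.sum_prod_type, hx.2]
  · intro x _ y _ h
    funext i j
    exact Fin.ext (congrFun h (i, j))
  · intro y hy
    rw [mem_piAntidiag] at hy
    have hle : ∀ k, y k < N + 1 := fun k =>
      Nat.lt_succ_of_le (hy.1 ▸ single_le_sum (f := y) (fun _ _ => Nat.zero_le _) (mem_univ k))
    refine ⟨fun i j => ⟨y (i, j), hle _⟩, ?_, rfl⟩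
    simp only [suppX, mem_filter, mem_univ, true_and]
    rw [← hy.1, Fintype.sum_prod_type]

lemma suppY_sum (m N : ℕ) (G : (Fin (m+1) → ℕ) → ℝ) :
    ∑ x ∈ suppY m N, G (fun k => (x k : ℕ))
      = ∑ x ∈ piAntidiag (univ : Finset (Fin (m+1))) N, G x := by
  refine sum_bij (fun x _ k => (x k : ℕ)) ?_ ?_ ?_ (fun _ _ => rfl)
  · intro x hx
    simp only [suppY, mem_filter] at hx
    simp [mem_piAntidiag, hx.2]
  · intro x _ y _ h
    funext i
    exact Fin.ext (congrFun h i)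
  · intro y hy
    rw [mem_piAntidiag] at hy
    have hle : ∀ k, y k < N + 1 := fun k =>
      Nat.lt_succ_of_le (hy.1 ▸ single_le_sum (f := y) (fun _ _ => Nat.zero_le _) (mem_univ k))
    refine ⟨fun i => ⟨y i, hle _⟩, ?_, rfl⟩
    simp only [suppY, mem_filter, mem_univ, true_and]
    rw [← hy.1]

lemma X_marg (m n N : ℕ) (p : Fin (m+1) → Fin (n+1) → ℝ) (hp : ∑ i, ∑ j, p i j = 1)
    (i : Fin (m+1)) (f : ℕ → ℝ) :
    ∑ x ∈ suppX m n N, wX p x * f (∑ j, (x i j : ℕ))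
      = ∑ z ∈ range (N+1), binPMF N (∑ j, p i j) z * f z := by
  have h := marg (fun k : Fin (m+1) × Fin (n+1) => p k.1 k.2) (({i} : Finset (Fin (m+1))) ×ˢ univ) N f
  have hq : ∑ k ∈ (({i} : Finset (Fin (m+1))) ×ˢ (univ : Finset (Fin (n+1)))), p k.1 k.2
      = ∑ j, p i j := by rw [sum_product]; simp
  have hc : ∑ k ∈ (({i} : Finset (Fin (m+1))) ×ˢ (univ : Finset (Fin (n+1))))ᶜ, p k.1 k.2
      = 1 - ∑ j, p i j := by
    rw [eq_sub_iff_add_eq, ← hq, sum_compl_add_sum, Fintype.sum_prod_type, hp]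
  rw [hq, hc, ← suppX_sum] at h
  simp only [binPMF]
  rw [← h]
  refine sum_congr rfl fun x _ => ?_
  simp only [wX, Fintype.prod_prod_type, sum_product, sum_singleton]

lemma Y_marg (m n N : ℕ) (p : Fin (m+1) → Fin (n+1) → ℝ) (hp : ∑ i, ∑ j, p i j = 1)
    (i : Fin (m+1)) (f : ℕ → ℝ) :
    ∑ y ∈ suppY m N, wY p y * f (y i : ℕ)
      = ∑ z ∈ range (N+1), binPMF N (∑ j, p i j) z * f z := by
  have h := marg (fun k : Fin (m+1) => ∑ j, p k j) {i} N f
  have hc : ∑ k ∈ ({i} : Finset (Fin (m+1)))ᶜ, ∑ j, p k j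
      = 1 - ∑ j, p i j := by
    rw [eq_sub_iff_add_eq, ← sum_singleton (fun k => ∑ j, p k j) i, sum_compl_add_sum, hp]
  rw [hc, ← suppY_sum] at h
  simp only [sum_singleton] at h
  simp only [binPMF]
  rw [← h]
  rfl

lemma bin_nonneg (N : ℕ) (q : ℝ) (h0 : 0 ≤ q) (h1 : q ≤ 1) (z : ℕ) : 0 ≤ binPMF N q z := by
  have : 0 ≤ 1 - q := by linarith
  unfold binPMF; positivity

lemma bin_sum (N : ℕ) (q : ℝ) : ∑ z ∈ range (N+1), binPMF N q z = 1 := by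
  have h := add_pow q (1 - q) N
  simp only [add_sub_cancel, one_pow] at h
  rw [h]
  exact sum_congr rfl fun z _ => by unfold binPMF; ring

lemma bin_mean (N : ℕ) (q : ℝ) : ∑ z ∈ range (N+1), binPMF N q z * z = N * q := by
  have h := congrArg (Polynomial.eval q) (bernsteinPolynomial.sum_smul ℝ N)
  simp only [Polynomial.eval_finsetSum, bernsteinPolynomial] at h
  simp at h
  rw [← h]
  exact sum_congr rfl fun z _ => by unfold binPMF; ring

lemma bin_inv (N : ℕ) (q : ℝ) (h0 : 0 < q) (h1 : q ≤ 1) :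
    ∑ z ∈ range (N+1), binPMF N q z * (1 / ((z:ℝ) + 1)) ≤ 1 / ((N + 1) * q) := by
  rw [le_div_iff₀ (by positivity), sum_mul]
  have hs := bin_sum (N+1) q
  rw [sum_range_succ' _ (N+1)] at hs
  have : ∀ z ∈ range (N+1), binPMF N q z * (1 / ((z:ℝ) + 1)) * ((N + 1) * q)
      = binPMF (N+1) q (z+1) := by
    intro z _
    have h := Nat.add_one_mul_choose_eq N z
    have h' : ((N:ℝ) + 1) * N.choose z = (N+1).choose (z+1) * ((z:ℝ) + 1) := by exact_mod_cast h
    unfold binPMF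
    rw [Nat.add_sub_add_right]
    have hz : (z:ℝ) + 1 ≠ 0 := by positivity
    field_simp
    rw [pow_succ]
    linear_combination (q ^ z * q * (1-q)^(N-z)) * h'
  rw [sum_congr rfl this]
  linarith [bin_nonneg (N+1) q h0.le h1 0]

noncomputable def gfun (N : ℕ) (a A q : ℝ) : ℝ :=
  ∑ z ∈ range (N+1), binPMF N q z * Real.log ((z + a) / (N + A))

noncomputable def phi (N : ℕ) (a A q : ℝ) : ℝ :=
  (N * q + a) / (N + A) - q - (q * gfun N a A q - q * Real.log q)

lemma phi_cont (N : ℕ) (a A : ℝ) : Continuous (phi N a A) := by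
  unfold phi gfun binPMF
  have := Real.continuous_mul_log
  fun_prop

/-- `phi` as a binomial average of the gaps in `log t ≤ t - 1`. -/
lemma phi_eq (N : ℕ) (a A q : ℝ) (ha : 0 < a) (hA : 0 < A) (h0 : 0 < q) :
    phi N a A q = ∑ z ∈ range (N+1), binPMF N q z *
      (q * (((z + a) / (N + A)) / q - 1 - Real.log (((z + a) / (N + A)) / q))) := by
  have hNA : (0:ℝ) < N + A := by positivity
  have : ∀ z ∈ range (N+1), binPMF N q z *
      (q * (((z + a) / (N + A)) / q - 1 - Real.log (((z + a) / (N + A)) / q)))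
      = (binPMF N q z * z) * (1 / (N + A)) + binPMF N q z * (a / (N+A) - q + q * Real.log q)
        - (binPMF N q z * Real.log ((z + a) / (N + A))) * q := by
    intro z _
    rw [Real.log_div (by positivity) h0.ne']
    field_simp
    ring
  rw [sum_congr rfl this, sum_sub_distrib, sum_add_distrib, ← sum_mul, ← sum_mul, ← sum_mul,
    bin_mean, bin_sum]
  unfold phi gfun
  ring

lemma gap_nonneg (t : ℝ) (ht : 0 < t) : 0 ≤ t - 1 - Real.log t := by
  linarith [Real.log_le_sub_one_of_pos ht]

lemma phi_nonneg (N : ℕ) (a A q : ℝ) (ha : 0 < a) (hA : 0 < A) (h0 : 0 < q) (h1 : q ≤ 1) :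
    0 ≤ phi N a A q := by
  have hNA : (0:ℝ) < N + A := by positivity
  rw [phi_eq N a A q ha hA h0]
  refine sum_nonneg fun z _ => mul_nonneg (bin_nonneg N q h0.le h1 z) (mul_nonneg h0.le ?_)
  exact gap_nonneg _ (by positivity)

lemma phi_pos (N : ℕ) (hN : 1 ≤ N) (a A q : ℝ) (ha : 0 < a) (hA : 0 < A) (h0 : 0 ≤ q) (h1 : q < 1) :
    0 < phi N a A q := by
  have hNA : (0:ℝ) < N + A := by positivity
  rcases h0.eq_or_lt with rfl | h0
  · simp only [phi]; simp; positivity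
  rw [phi_eq N a A q ha hA h0]
  have key : ∃ z ∈ range (N+1), 0 < binPMF N q z ∧ (((z:ℝ) + a) / (N + A)) / q ≠ 1 := by
    have hq : 0 < 1 - q := by linarith
    by_cases h : (((0:ℕ):ℝ) + a) / (N + A) / q = 1
    · refine ⟨N, by simp, by unfold binPMF; simp; positivity, ?_⟩
      rw [← h]
      intro h'
      have hN' : (0:ℝ) < N := by exact_mod_cast hN
      field_simp at h'
      simp at h'
      omega
    · exact ⟨0, by simp, by unfold binPMF; simp; positivity, h⟩
  obtain ⟨z, hz, hb, hne⟩ := key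
  refine sum_pos' (fun z _ => mul_nonneg (bin_nonneg N q h0.le h1.le z) (mul_nonneg h0.le ?_))
    ⟨z, hz, mul_pos hb (mul_pos h0 ?_)⟩
  · exact gap_nonneg _ (by positivity)
  · have := Real.log_lt_sub_one_of_pos (x := (((z:ℝ) + a) / (N + A)) / q) (by positivity) hne
    linarith

lemma phi_unif (N : ℕ) (hN : 1 ≤ N) (a A : ℝ) (ha : 0 < a) (hA : 0 < A) :
    ∃ c > 0, ∀ q ∈ Set.Icc (0:ℝ) (1/2), c ≤ phi N a A q := by
  obtain ⟨q0, hq0, h⟩ := (isCompact_Icc (a := (0:ℝ)) (b := 1/2)).exists_isMinOn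
    (Set.nonempty_Icc.2 (by norm_num)) (phi_cont N a A).continuousOn
  exact ⟨_, phi_pos N hN a A q0 ha hA hq0.1 (by linarith [hq0.2]), fun q hq => h hq⟩

/-- Difference of the losses. -/
lemma loss_diff (m n N N' : ℕ) (hn : 1 ≤ n) (p : Fin (m+1) → Fin (n+1) → ℝ) (hp : ∀ i j, 0 < p i j)
    (x : Fin (m+1) → Fin (n+1) → Fin (N+1)) (y : Fin (m+1) → Fin (N'+1)) :
    entropyLoss (phat x y) p - entropyLoss (ptilde x) p ≤
      ∑ i, (∑ j, p i j) *
        ((Real.log ((((∑ j, (x i j : ℕ) : ℕ) : ℝ) + (1 + n) / 2) / (N + (1 + m) * (1 + n) / 2))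
          - Real.log (∑ j, p i j))
        + Real.log ((∑ j, p i j) * ((N : ℝ) + N' + (1 + m) * (1 + n) / 2) * (1 / ((y i : ℕ) + 1)))) := by
  unfold entropyLoss
  rw [← sum_sub_distrib]
  refine sum_le_sum fun i _ => ?_
  rw [← sum_sub_distrib]
  set q := ∑ j, p i j with hq
  have hq0 : 0 < q := sum_pos (fun j _ => hp i j) univ_nonempty
  rw [hq, sum_mul, ← hq]
  refine sum_le_sum fun j _ => ?_
  rw [← mul_sub]
  refine mul_le_mul_of_nonneg_left ?_ (hp i j).le
  unfold phat ptilde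
  set X : ℝ := ((∑ j, (x i j : ℕ) : ℕ) : ℝ) with hX
  have hX0 : 0 ≤ X := by positivity
  have hpj := hp i j
  set P := p i j
  set A : ℝ := (1 + m) * (1 + n) / 2 with hA
  have hA0 : 0 < A := by positivity
  set a : ℝ := (1 + n) / 2 with ha
  set c : ℝ := (x i j : ℝ) + 1/2 with hc
  have hc0 : 0 < c := by positivity
  have hy : (0:ℝ) ≤ (y i : ℕ) := by positivity
  set Y : ℝ := ((y i : ℕ) : ℝ)
  have hn' : (1:ℝ) ≤ n := by exact_mod_cast hn
  have ha0 : 1 ≤ a := by rw [ha]; linarith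
  have e1 : Real.log (P / ((X + Y + a) / (N + N' + A) * (c / (X + a))))
      = Real.log P - (Real.log (X + Y + a) - Real.log (N + N' + A) + (Real.log c - Real.log (X + a))) := by
    rw [Real.log_div (by positivity) (by positivity), Real.log_mul (by positivity) (by positivity),
      Real.log_div (by positivity) (by positivity), Real.log_div (by positivity) (by positivity)]
  have e2 : Real.log (P / (c / (N + A))) = Real.log P - (Real.log c - Real.log (N + A)) := by
    rw [Real.log_div (by positivity) (by positivity), Real.log_div (by positivity) (by positivity)]
  have e3 : Real.log ((X + a) / (N + A)) = Real.log (X + a) - Real.log (N + A) :=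
    Real.log_div (by positivity) (by positivity)
  have e4 : Real.log (q * (N + N' + A) * (1 / (Y + 1)))
      = Real.log q + Real.log (N + N' + A) - Real.log (Y + 1) := by
    rw [mul_one_div, Real.log_div (by positivity) (by positivity),
      Real.log_mul (by positivity) (by positivity)]
  have e5 : Real.log (Y + 1) ≤ Real.log (X + Y + a) :=
    Real.log_le_log (by positivity) (by linarith)
  rw [e1, e2, e3, e4]
  linarith

lemma wX_nonneg {m n N : ℕ} (p : Fin (m+1) → Fin (n+1) → ℝ) (hp : ∀ i j, 0 < p i j)
    (x : Fin (m+1) → Fin (n+1) → Fin (N+1)) : 0 ≤ wX p x :=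
  mul_nonneg (Nat.cast_nonneg _) (prod_nonneg fun i _ => prod_nonneg fun j _ => pow_nonneg (hp i j).le _)

lemma wY_nonneg {m n N : ℕ} (p : Fin (m+1) → Fin (n+1) → ℝ) (hp : ∀ i j, 0 < p i j)
    (y : Fin (m+1) → Fin (N+1)) : 0 ≤ wY p y :=
  mul_nonneg (Nat.cast_nonneg _) (prod_nonneg fun i _ => pow_nonneg (sum_nonneg fun j _ => (hp i j).le) _)

/-- The aggregated-sample part. -/
lemma Y_bound (N' : ℕ) (q M : ℝ) (h0 : 0 < q) (h1 : q ≤ 1) (hM : 0 < M) :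
    ∑ z ∈ range (N'+1), binPMF N' q z * Real.log (q * M * (1 / ((z:ℝ) + 1)))
      ≤ Real.log (M / (N' + 1)) := by
  have hs : 0 < M / ((N':ℝ) + 1) := by positivity
  have step : ∀ z ∈ range (N'+1), binPMF N' q z * Real.log (q * M * (1 / ((z:ℝ) + 1)))
      ≤ binPMF N' q z * (1 / ((z:ℝ) + 1)) * ((N' + 1) * q)
        + binPMF N' q z * (Real.log (M / (N' + 1)) - 1) := by
    intro z _
    rw [mul_assoc (binPMF N' q z), ← mul_add]
    refine mul_le_mul_of_nonneg_left ?_ (bin_nonneg N' q h0.le h1 z)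
    have h := Real.log_le_sub_one_of_pos (x := (1 / ((z:ℝ) + 1)) * ((N' + 1) * q)) (by positivity)
    have e : q * M * (1 / ((z:ℝ) + 1)) = ((1 / ((z:ℝ) + 1)) * ((N' + 1) * q)) * (M / (N' + 1)) := by
      field_simp
    rw [e, Real.log_mul (by positivity) (by positivity)]
    linarith
  refine (sum_le_sum step).trans ?_
  rw [sum_add_distrib, ← sum_mul, ← sum_mul, bin_sum]
  have h := bin_inv N' q h0 h1
  rw [le_div_iff₀ (by positivity)] at h
  linarith

lemma wX_sum (m n N : ℕ) (p : Fin (m+1) → Fin (n+1) → ℝ) (hp : ∑ i, ∑ j, p i j = 1) :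
    ∑ x ∈ suppX m n N, wX p x = 1 := by
  have h := X_marg m n N p hp 0 (fun _ => 1)
  simpa [bin_sum] using h

lemma wY_sum (m n N : ℕ) (p : Fin (m+1) → Fin (n+1) → ℝ) (hp : ∑ i, ∑ j, p i j = 1) :
    ∑ y ∈ suppY m N, wY p y = 1 := by
  have h := Y_marg m n N p hp 0 (fun _ => 1)
  simpa [bin_sum] using h

lemma risk_le (m n N N' : ℕ) (hn : 1 ≤ n) (p : Fin (m+1) → Fin (n+1) → ℝ) (hpos : ∀ i j, 0 < p i j)
    (hp : ∑ i, ∑ j, p i j = 1) :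
    riskDiff m n p N N' ≤ ∑ i, (∑ j, p i j) *
      ((gfun N ((1 + n) / 2) ((1 + m) * (1 + n) / 2) (∑ j, p i j) - Real.log (∑ j, p i j))
        + Real.log (((N : ℝ) + N' + (1 + m) * (1 + n) / 2) / (N' + 1))) := by
  have hstep : riskDiff m n p N N' ≤ ∑ x ∈ suppX m n N, ∑ y ∈ suppY m N', wX p x * wY p y *
      ∑ i, (∑ j, p i j) *
        ((Real.log ((((∑ j, (x i j : ℕ) : ℕ) : ℝ) + (1 + n) / 2) / (N + (1 + m) * (1 + n) / 2))
          - Real.log (∑ j, p i j))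
        + Real.log ((∑ j, p i j) * ((N : ℝ) + N' + (1 + m) * (1 + n) / 2)
          * (1 / ((y i : ℕ) + 1)))) := by
    unfold riskDiff
    exact sum_le_sum fun x _ => sum_le_sum fun y _ => mul_le_mul_of_nonneg_left
      (loss_diff m n N N' hn p hpos x y) (mul_nonneg (wX_nonneg p hpos x) (wY_nonneg p hpos y))
  refine hstep.trans ?_
  have hswap : ∀ F : Fin (m+1) → (Fin (m+1) → Fin (n+1) → Fin (N+1)) → ℝ,
      ∀ H : Fin (m+1) → (Fin (m+1) → Fin (N'+1)) → ℝ,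
      ∑ x ∈ suppX m n N, ∑ y ∈ suppY m N', wX p x * wY p y *
        ∑ i, (∑ j, p i j) * (F i x + H i y)
      = ∑ i, (∑ j, p i j) * (∑ x ∈ suppX m n N, wX p x * F i x
          + ∑ y ∈ suppY m N', wY p y * H i y) := by
    intro F H
    have h1 : ∀ x ∈ suppX m n N, ∑ y ∈ suppY m N', wX p x * wY p y *
        ∑ i, (∑ j, p i j) * (F i x + H i y)
        = ∑ i, (∑ j, p i j) * (wX p x * F i x + wX p x * ∑ y ∈ suppY m N', wY p y * H i y) := by
      intro x _
      simp only [mul_sum (s := (univ : Finset (Fin (m+1))))]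
      rw [sum_comm]
      refine sum_congr rfl fun i _ => ?_
      have : ∀ y ∈ suppY m N', wX p x * wY p y * ((∑ j, p i j) * (F i x + H i y))
          = wY p y * ((∑ j, p i j) * (wX p x * F i x))
            + (∑ j, p i j) * wX p x * (wY p y * H i y) := fun y _ => by ring
      rw [sum_congr rfl this, sum_add_distrib, ← sum_mul, wY_sum m n N' p hp, ← mul_sum]
      ring
    rw [sum_congr rfl h1, sum_comm]
    refine sum_congr rfl fun i _ => ?_
    rw [← mul_sum, sum_add_distrib, ← sum_mul, wX_sum m n N p hp, one_mul]
  rw [hswap (fun i x => Real.log ((((∑ j, (x i j : ℕ) : ℕ) : ℝ) + (1 + n) / 2)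
      / (N + (1 + m) * (1 + n) / 2)) - Real.log (∑ j, p i j))
    (fun i y => Real.log ((∑ j, p i j) * ((N : ℝ) + N' + (1 + m) * (1 + n) / 2)
          * (1 / (((y i : ℕ) : ℝ) + 1))))]
  refine sum_le_sum fun i _ => ?_
  have hq0 : 0 < ∑ j, p i j := sum_pos (fun j _ => hpos i j) univ_nonempty
  have hq1 : ∑ j, p i j ≤ 1 := hp ▸ single_le_sum (f := fun i => ∑ j, p i j)
    (fun i _ => sum_nonneg fun j _ => (hpos i j).le) (mem_univ i)
  refine mul_le_mul_of_nonneg_left (add_le_add (le_of_eq ?_) ?_) hq0.le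
  · have h := X_marg m n N p hp i (fun z => Real.log (((z:ℝ) + (1 + n) / 2)
      / (N + (1 + m) * (1 + n) / 2)) - Real.log (∑ j, p i j))
    rw [h]
    simp only [mul_sub, sum_sub_distrib]
    rw [← sum_mul, bin_sum, one_mul]
    rfl
  · have h := Y_marg m n N' p hp i (fun z => Real.log ((∑ j, p i j)
      * ((N : ℝ) + N' + (1 + m) * (1 + n) / 2) * (1 / ((z:ℝ) + 1))))
    rw [h]
    exact Y_bound N' _ _ hq0 hq1 (by positivity)

theorem dominance_large_aggregated_sample (m n N : ℕ)
    (hm : 1 ≤ m) (hn : 3 ≤ n) (hN : 1 ≤ N) :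
    ∃ N'₀ : ℕ, ∀ N' : ℕ, N'₀ ≤ N' →
      ∀ p : Fin (m+1) → Fin (n+1) → ℝ, (∀ i j, 0 < p i j) →
        ∑ i, ∑ j, p i j = 1 → riskDiff m n p N N' < 0 := by
  set a : ℝ := (1 + n) / 2 with ha
  set A : ℝ := (1 + m) * (1 + n) / 2 with hA
  have ha0 : 0 < a := by positivity
  have hA0 : 0 < A := by positivity
  obtain ⟨c, hc, hphi⟩ := phi_unif N hN a A ha0 hA0
  obtain ⟨K, hK⟩ := exists_nat_gt ((N + A) / c)
  refine ⟨K, fun N' hN' p hpos hp => ?_⟩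
  refine (risk_le m n N N' (by omega) p hpos hp).trans_lt ?_
  rw [← ha, ← hA]
  have hq0 : ∀ i, 0 < ∑ j, p i j := fun i => sum_pos (fun j _ => hpos i j) univ_nonempty
  have hq1 : ∀ i, ∑ j, p i j ≤ 1 := fun i => hp ▸ single_le_sum (f := fun i => ∑ j, p i j)
    (fun i _ => (hq0 i).le) (mem_univ i)
  have hlog : Real.log (((N : ℝ) + N' + A) / (N' + 1)) < c := by
    have h1 := Real.log_le_sub_one_of_pos (x := ((N : ℝ) + N' + A) / (N' + 1)) (by positivity)
    have h2 : ((N : ℝ) + N' + A) / (N' + 1) - 1 < c := by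
      have hKN : (K:ℝ) ≤ N' := by exact_mod_cast hN'
      have h3 : (N + A) < c * N' := by
        rw [div_lt_iff₀ hc] at hK
        nlinarith
      rw [sub_lt_iff_lt_add, div_lt_iff₀ (by positivity)]
      nlinarith
    linarith
  set lam := Real.log (((N : ℝ) + N' + A) / (N' + 1))
  have hterm : ∀ i ∈ (univ : Finset (Fin (m+1))), (∑ j, p i j) *
      ((gfun N a A (∑ j, p i j) - Real.log (∑ j, p i j)) + lam)
      = (∑ j, p i j) * (N / (N + A) - 1 + lam) + a / (N + A) - phi N a A (∑ j, p i j) := by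
    intro i _
    unfold phi
    ring
  rw [sum_congr rfl hterm, sum_sub_distrib, sum_add_distrib, ← sum_mul, hp]
  simp only [sum_const, card_univ, Fintype.card_fin, nsmul_eq_mul]
  have hAa : ((m + 1 : ℕ) : ℝ) * (a / (N + A)) = A / (N + A) := by
    rw [hA, ha]; push_cast; ring
  have hone : (N:ℝ) / (N + A) + A / (N + A) = 1 := by field_simp
  have hex : ∃ i, ∑ j, p i j ≤ 1/2 := by
    by_contra! hcon
    have h1 : ∑ i : Fin (m+1), (1/2 : ℝ) < ∑ i, ∑ j, p i j :=
      sum_lt_sum_of_nonempty univ_nonempty fun i _ => hcon i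
    rw [hp] at h1
    simp at h1
    have : (1:ℝ) ≤ m := by exact_mod_cast hm
    linarith
  obtain ⟨i, hi⟩ := hex
  have hsum : c ≤ ∑ i, phi N a A (∑ j, p i j) :=
    (hphi _ ⟨(hq0 i).le, hi⟩).trans (single_le_sum (f := fun i => phi N a A (∑ j, p i j))
      (fun i _ => phi_nonneg N a A _ ha0 hA0 (hq0 i) (hq1 i)) (mem_univ i))
  rw [hAa]
  linarith
end

section
/- Fix integers m ≥ 1, n ≥ 3, and N' ≥ 1. Then there exists N₀ ∈ ℕ such that for every integer N ≥ N₀ and every vector p = (p_{i,j}) of positive reals summing to 1, Δ_p(N, N') < 0; that is, for sufficiently large direct sample size N, the estimator p̂ dominates the estimator p̃ under entropy loss. -/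
open Finset

/-- Binomial(K, q) expectation, defined by recursion on the number of trials. -/
noncomputable def binE (q : ℝ) : ℕ → (ℕ → ℝ) → ℝ
  | 0, g => g 0
  | K + 1, g => (1 - q) * binE q K g + q * binE q K (fun z => g (z + 1))

lemma binE_const (q : ℝ) (K : ℕ) (c : ℝ) : binE q K (fun _ => c) = c := by
  induction K with
  | zero => rfl
  | succ K ih => simp only [binE, ih]; ring

lemma binE_add (q : ℝ) (K : ℕ) (f g : ℕ → ℝ) :
    binE q K (fun z => f z + g z) = binE q K f + binE q K g := by
  induction K generalizing f g with
  | zero => rfl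
  | succ K ih => simp only [binE, ih]; ring

lemma binE_smul (q : ℝ) (K : ℕ) (c : ℝ) (g : ℕ → ℝ) :
    binE q K (fun z => c * g z) = c * binE q K g := by
  induction K generalizing g with
  | zero => rfl
  | succ K ih => simp only [binE, ih]; ring

lemma binE_mono (q : ℝ) (h0 : 0 ≤ q) (h1 : q ≤ 1) (K : ℕ) (f g : ℕ → ℝ) (h : ∀ z, f z ≤ g z) :
    binE q K f ≤ binE q K g := by
  induction K generalizing f g with
  | zero => exact h 0
  | succ K ih =>
    simp only [binE]
    have h2 := ih f g h
    have h3 := ih (fun z => f (z + 1)) (fun z => g (z + 1)) (fun z => h _)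
    have : 0 ≤ 1 - q := by linarith
    gcongr

/-- Stein-type identity. -/
lemma binE_stein (q : ℝ) (K : ℕ) (g : ℕ → ℝ) :
    binE q (K + 1) (fun z => (z : ℝ) * g z) = (K + 1) * (q * binE q K (fun z => g (z + 1))) := by
  induction K generalizing g with
  | zero => simp [binE]
  | succ K ih =>
    have h1 := ih g
    have h2 := ih (fun z => g (z + 1))
    have h3 : binE q (K + 1) (fun z => ((z + 1 : ℕ) : ℝ) * g (z + 1)) =
        binE q (K + 1) (fun z => (z : ℝ) * g (z + 1)) + binE q (K + 1) (fun z => g (z + 1)) := by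
      rw [← binE_add]; congr 1; funext z; push_cast; ring
    rw [binE, h1, h3, h2]
    push_cast
    rw [show binE q (K + 1) (fun z => g (z + 1)) = (1 - q) * binE q K (fun z => g (z + 1)) +
      q * binE q K (fun z => g (z + 1 + 1)) from rfl]
    ring

lemma binE_semigroup (q : ℝ) (K L : ℕ) (g : ℕ → ℝ) :
    binE q K (fun s => binE q L (fun y => g (s + y))) = binE q (K + L) g := by
  induction K generalizing g with
  | zero => simp [binE]
  | succ K ih =>
    rw [show K + 1 + L = (K + L) + 1 by ring]
    simp only [binE]
    rw [← ih, ← ih]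
    congr 3
    funext s; congr 1; funext y; congr 1; ring

lemma binE_inv_shift (q : ℝ) (K : ℕ) (b : ℝ) (hb : 1 < b) :
    q * binE q K (fun z => 1 / ((z : ℝ) + b)) =
      (1 - (b - 1) * binE q (K + 1) (fun z => 1 / ((z : ℝ) + (b - 1)))) / (K + 1) := by
  have h := binE_stein q K (fun z => 1 / ((z : ℝ) + (b - 1)))
  have e1 : (fun z : ℕ => 1 / (((z + 1 : ℕ) : ℝ) + (b - 1))) = fun z : ℕ => 1 / ((z : ℝ) + b) := by
    funext z; push_cast; congr 1; ring
  have e2 : (fun z : ℕ => (z : ℝ) * (1 / ((z : ℝ) + (b - 1)))) =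
      fun z : ℕ => 1 + (-(b - 1)) * (1 / ((z : ℝ) + (b - 1))) := by
    funext z
    have : (z : ℝ) + (b - 1) ≠ 0 := by have : 0 < b - 1 := by linarith
                                       positivity
    field_simp; ring
  rw [e1, e2, binE_add, binE_smul, binE_const] at h
  rw [eq_div_iff (by positivity)]
  linarith

lemma binE_inv_lower (q : ℝ) (h0 : 0 ≤ q) (h1 : q ≤ 1) (K : ℕ) (b : ℝ) (hb : 2 < b) :
    (q - (b - 1) / (K + 2)) / (K + 1) ≤ q * (q * binE q K (fun z => 1 / ((z : ℝ) + b))) := by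
  have s1 := binE_inv_shift q K b (by linarith)
  have s2 := binE_inv_shift q (K + 1) (b - 1) (by linarith)
  have hpos : 0 ≤ binE q (K + 1 + 1) (fun z => 1 / ((z : ℝ) + (b - 1 - 1))) := by
    rw [← binE_const q (K + 1 + 1) 0]
    apply binE_mono q h0 h1
    intro z
    have : 0 < b - 1 - 1 := by linarith
    positivity
  have s3 : q * binE q (K + 1) (fun z => 1 / ((z : ℝ) + (b - 1))) ≤ 1 / (K + 2) := by
    rw [s2]; push_cast
    rw [show (K : ℝ) + 1 + 1 = K + 2 by ring]
    gcongr
    nlinarith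
  rw [s1, mul_div_assoc']
  gcongr
  have : (b - 1) * (q * binE q (K + 1) (fun z => 1 / ((z : ℝ) + (b - 1)))) ≤
    (b - 1) * (1 / (K + 2)) := mul_le_mul_of_nonneg_left s3 (by linarith)
  rw [mul_one_div] at this
  nlinarith

lemma log_lower (x : ℝ) (hx : 0 < x) : 1 / (x + 1 / 2) ≤ Real.log (x + 1) - Real.log x := by
  have h := Real.le_log_one_add_of_nonneg (x := 1 / x) (by positivity)
  rw [← Real.log_div (by positivity) (by positivity)]
  have e1 : 2 * (1 / x) / (1 / x + 2) = 1 / (x + 1 / 2) := by field_simp; ring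
  have e2 : 1 + 1 / x = (x + 1) / x := by field_simp
  rwa [e1, e2] at h

lemma log_upper (x : ℝ) (hx : 0 < x) :
    Real.log (x + 1) - Real.log x ≤ (1 / x + 1 / (x + 1)) / 2 := by
  rw [← Real.log_div (by positivity) (by positivity)]
  have h1 : 0 ≤ Real.log ((x + 1) / x) := by
    apply Real.log_nonneg
    rw [le_div_iff₀ hx]; linarith
  have h := Real.self_le_sinh_iff.mpr h1
  rw [Real.sinh_log (by positivity)] at h
  refine h.trans (le_of_eq ?_)
  field_simp
  ring

lemma rate_bound (M c : ℝ) (hM : 2 ≤ M) (hc : 0 < c) :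
    ∃ K₀ : ℕ, ∀ K : ℕ, K₀ ≤ K →
      Real.log ((K : ℝ) + c + 1) - Real.log ((K : ℝ) + c) <
        (1 - (c - M / 2) / (K + 2)) / (K + 1) := by
  set B := (c ^ 2 + c) + (2 - c + M / 2) * (2 * c + 1) - 2 - 3 * (c + 1 / 2) with hB
  set C := (2 - c + M / 2) * (c ^ 2 + c) - 2 * (c + 1 / 2) with hC
  obtain ⟨K₀, hK₀⟩ := exists_nat_ge (2 * (|B| + |C|) + 1)
  refine ⟨K₀, fun K hK => ?_⟩
  have hK' : 2 * (|B| + |C|) + 1 ≤ (K : ℝ) := hK₀.trans (by exact_mod_cast hK)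
  generalize (K : ℝ) = k at hK'
  have hB0 := abs_nonneg B
  have hC0 := abs_nonneg C
  have hk : 1 ≤ k := by linarith
  refine (log_upper (k + c) (by linarith)).trans_lt ?_
  have e1 : (1 / (k + c) + 1 / (k + c + 1)) / 2 =
      (k + c + 1 / 2) / ((k + c) * (k + c + 1)) := by field_simp; ring
  have e2 : (1 - (c - M / 2) / (k + 2)) / (k + 1) =
      (k + 2 - c + M / 2) / ((k + 1) * (k + 2)) := by field_simp; ring
  rw [e1, e2, div_lt_div_iff₀ (by positivity) (by positivity)]
  have key : (k + 2 - c + M / 2) * ((k + c) * (k + c + 1)) -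
      (k + c + 1 / 2) * ((k + 1) * (k + 2)) = k ^ 2 * ((M - 1) / 2) + B * k + C := by
    rw [hB, hC]; ring
  have h1 : k ^ 2 * (1 / 2) ≤ k ^ 2 * ((M - 1) / 2) := by gcongr; linarith
  have h2 : k * (2 * (|B| + |C|) + 1) ≤ k * k := by gcongr
  have h3 : -(|B| * k) ≤ B * k := by
    have := mul_le_mul_of_nonneg_right (neg_abs_le B) (by linarith : (0:ℝ) ≤ k)
    linarith
  have h4 := neg_abs_le C
  have h5 : |C| ≤ |C| * k := le_mul_of_one_le_right hC0 hk
  nlinarith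

/-- The multinomial sum of a function of the count of a class of cells is a binomial one. -/
lemma multinomial_marginal {κ : Type*} [Fintype κ] [DecidableEq κ] (q : κ → ℝ)
    (hq : ∑ c, q c = 1) (S : κ → Prop) [DecidablePred S] (N : ℕ) (g : ℕ → ℝ) :
    ∑ k ∈ piAntidiag (univ : Finset κ) N,
      ((Nat.multinomial univ k : ℝ) * ∏ c, q c ^ k c) * g (∑ c, if S c then k c else 0) =
      binE (∑ c, if S c then q c else 0) N g := by
  set P := ∑ c, if S c then q c else 0 with hP
  let φ : (ℕ → ℝ) → Polynomial ℝ →ₗ[ℝ] ℝ := fun g =>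
    Polynomial.lsum (fun k => (g k) • (LinearMap.id : ℝ →ₗ[ℝ] ℝ))
  have hφ : ∀ g k c, φ g (Polynomial.monomial k c) = g k * c := by
    intro g k c
    simp [φ, Polynomial.lsum_apply, Polynomial.sum_monomial_index]
  let A : Polynomial ℝ := Polynomial.C (1 - P) + Polynomial.C P * Polynomial.X
  have step : ∀ g B, φ g (B * A) = (1 - P) * φ g B + P * φ (fun z => g (z + 1)) B := by
    intro g B
    induction B using Polynomial.induction_on' with
    | add p q hp hq => rw [add_mul, map_add, hp, hq, map_add, map_add]; ring
    | monomial k c =>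
      have : Polynomial.monomial k c * A =
          Polynomial.monomial k (c * (1 - P)) + Polynomial.monomial (k + 1) (c * P) := by
        simp only [A, mul_add, ← mul_assoc, Polynomial.monomial_mul_C, Polynomial.monomial_mul_X]
      rw [this, map_add, hφ, hφ, hφ, hφ]; ring
  have hpow : ∀ N g, φ g (A ^ N) = binE P N g := by
    intro N
    induction N with
    | zero => intro g; rw [pow_zero, ← Polynomial.monomial_zero_one, hφ]; simp [binE]
    | succ N ih => intro g; rw [pow_succ, step, ih, ih]; rfl
  have hA : A = ∑ c, Polynomial.monomial (if S c then 1 else 0) (q c) := by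
    have e : ∀ c, Polynomial.monomial (if S c then 1 else 0) (q c) =
      Polynomial.C (q c - if S c then q c else 0) +
        Polynomial.C (if S c then q c else 0) * Polynomial.X := by
      intro c
      by_cases h : S c
      · simp [h, Polynomial.C_mul_X_eq_monomial]
      · simp [h]
    simp only [e, A]
    rw [sum_add_distrib, ← sum_mul, ← map_sum, ← map_sum, sum_sub_distrib, hq]
  rw [← hpow, hA, sum_pow_eq_sum_piAntidiag, map_sum]
  refine sum_congr rfl fun k _ => ?_
  have e1 : ∏ c, (Polynomial.monomial (if S c then 1 else 0) (q c)) ^ k c =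
      Polynomial.monomial (∑ c, if S c then k c else 0) (∏ c, q c ^ k c) := by
    have : ∀ s : Finset κ, ∏ c ∈ s, (Polynomial.monomial (if S c then 1 else 0) (q c)) ^ k c =
      Polynomial.monomial (∑ c ∈ s, if S c then k c else 0) (∏ c ∈ s, q c ^ k c) := by
      intro s
      induction s using Finset.induction_on with
      | empty => simp
      | insert a s ha ih =>
        rw [prod_insert ha, sum_insert ha, prod_insert ha, ih, Polynomial.monomial_pow,
          Polynomial.monomial_mul_monomial]
        congr 2
        split_ifs <;> simp
    exact this univ
  rw [e1, ← nsmul_eq_mul (Nat.multinomial univ k) (Polynomial.monomial _ _), map_nsmul, hφ,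
    nsmul_eq_mul]
  ring

lemma expX {m n : ℕ} (p : Fin (m+1) → Fin (n+1) → ℝ) (hp : ∑ i, ∑ j, p i j = 1) (N : ℕ)
    (i : Fin (m+1)) (g : ℕ → ℝ) :
    ∑ x ∈ suppX m n N, wX p x * g (∑ j, (x i j : ℕ)) = binE (∑ j, p i j) N g := by
  have h := multinomial_marginal (fun c : Fin (m+1) × Fin (n+1) => p c.1 c.2)
    (by rw [Fintype.sum_prod_type]; exact hp) (fun c => c.1 = i) N g
  have e : ∑ c : Fin (m+1) × Fin (n+1), (if c.1 = i then p c.1 c.2 else 0) = ∑ j, p i j := by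
    rw [Fintype.sum_prod_type, Finset.sum_eq_single i] <;> simp +contextual
  rw [e] at h
  rw [← h]
  refine Finset.sum_bij (fun x _ => fun c => (x c.1 c.2 : ℕ)) ?_ ?_ ?_ ?_
  · intro x hx
    simp only [suppX, mem_filter, mem_univ, true_and] at hx
    simp only [mem_piAntidiag, mem_univ, implies_true, and_true]
    rw [Fintype.sum_prod_type]; exact hx
  · intro x _ y _ hxy
    funext a b
    exact Fin.ext (congrFun hxy (a, b))
  · intro k hk
    simp only [mem_piAntidiag, mem_univ, implies_true, and_true] at hk
    have hle : ∀ c, k c < N + 1 := fun c => by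
      have := Finset.single_le_sum (f := k) (fun _ _ => Nat.zero_le _) (mem_univ c)
      rw [show ∑ x, k x = N from hk] at this
      omega
    refine ⟨fun a b => ⟨k (a, b), hle _⟩, ?_, ?_⟩
    · simp only [suppX, mem_filter, mem_univ, true_and]
      rw [← Fintype.sum_prod_type (f := k)]; exact hk
    · rfl
  · intro x _
    have e2 : ∑ c : Fin (m+1) × Fin (n+1), (if c.1 = i then (x c.1 c.2 : ℕ) else 0) =
        ∑ j, (x i j : ℕ) := by
      rw [Fintype.sum_prod_type, Finset.sum_eq_single i] <;> simp +contextual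
    rw [e2, Fintype.prod_prod_type]; rfl

lemma expY {m n : ℕ} (p : Fin (m+1) → Fin (n+1) → ℝ) (hp : ∑ i, ∑ j, p i j = 1) (N : ℕ)
    (i : Fin (m+1)) (g : ℕ → ℝ) :
    ∑ y ∈ suppY m N, wY p y * g (y i : ℕ) = binE (∑ j, p i j) N g := by
  have h := multinomial_marginal (fun c : Fin (m+1) => ∑ j, p c j) hp (fun c => c = i) N g
  simp only [Finset.sum_ite_eq', mem_univ, if_true] at h
  rw [← h]
  refine Finset.sum_bij (fun y _ => fun c => (y c : ℕ)) ?_ ?_ ?_ ?_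
  · intro x hx
    simp only [suppY, mem_filter, mem_univ, true_and] at hx
    simp only [mem_piAntidiag, mem_univ, implies_true, and_true]
    exact hx
  · intro x _ y _ hxy
    funext a
    exact Fin.ext (congrFun hxy a)
  · intro k hk
    simp only [mem_piAntidiag, mem_univ, implies_true, and_true] at hk
    have hle : ∀ c, k c < N + 1 := fun c => by
      have := Finset.single_le_sum (f := k) (fun _ _ => Nat.zero_le _) (mem_univ c)
      rw [show ∑ x, k x = N from hk] at this
      omega
    refine ⟨fun a => ⟨k a, hle _⟩, ?_, rfl⟩
    simp only [suppY, mem_filter, mem_univ, true_and]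
    exact hk
  · intro x _
    rfl

lemma entropy_diff {m n N N' : ℕ} (p : Fin (m+1) → Fin (n+1) → ℝ) (hp : ∀ i j, 0 < p i j)
    (x : Fin (m+1) → Fin (n+1) → Fin (N+1)) (y : Fin (m+1) → Fin (N'+1)) :
    entropyLoss (phat x y) p - entropyLoss (ptilde x) p =
      ∑ i, (∑ j, p i j) *
        (Real.log (((N + N' : ℕ) : ℝ) + (1 + m) * (1 + n) / 2) -
            Real.log ((N : ℝ) + (1 + m) * (1 + n) / 2) -
          Real.log ((((∑ j, (x i j : ℕ)) + (y i : ℕ) : ℕ) : ℝ) + (1 + n) / 2) +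
          Real.log (((∑ j, (x i j : ℕ) : ℕ) : ℝ) + (1 + n) / 2)) := by
  unfold entropyLoss
  rw [← sum_sub_distrib]
  refine sum_congr rfl fun i _ => ?_
  rw [← sum_sub_distrib, sum_mul]
  refine sum_congr rfl fun j _ => ?_
  rw [← mul_sub]
  congr 1
  have h0 := hp i j
  unfold phat ptilde
  rw [Nat.cast_add (∑ j, (x i j : ℕ)), Nat.cast_add N]
  have hS : (0 : ℝ) ≤ ((∑ j, (x i j : ℕ) : ℕ) : ℝ) := Nat.cast_nonneg _
  have hy : (0 : ℝ) ≤ ((y i : ℕ) : ℝ) := Nat.cast_nonneg _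
  have hx : (0 : ℝ) ≤ ((x i j : ℕ) : ℝ) := Nat.cast_nonneg _
  generalize ((∑ j, (x i j : ℕ) : ℕ) : ℝ) = S at *
  generalize ((y i : ℕ) : ℝ) = Y at *
  generalize ((x i j : ℕ) : ℝ) = Z at *
  have a1 : S + Y + (1 + (n : ℝ)) / 2 ≠ 0 := by positivity
  have a2 : S + (1 + (n : ℝ)) / 2 ≠ 0 := by positivity
  have a3 : (N : ℝ) + N' + (1 + m) * (1 + n) / 2 ≠ 0 := by positivity
  have a4 : (N : ℝ) + (1 + m) * (1 + n) / 2 ≠ 0 := by positivity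
  have a5 : Z + 1 / 2 ≠ 0 := by positivity
  rw [Real.log_div h0.ne' (mul_ne_zero (div_ne_zero a1 a3) (div_ne_zero a5 a2)),
    Real.log_div h0.ne' (div_ne_zero a5 a4),
    Real.log_mul (div_ne_zero a1 a3) (div_ne_zero a5 a2), Real.log_div a1 a3,
    Real.log_div a5 a2, Real.log_div a5 a4]
  ring

lemma riskDiff_eq {m n : ℕ} (p : Fin (m+1) → Fin (n+1) → ℝ) (hp : ∀ i j, 0 < p i j)
    (hs : ∑ i, ∑ j, p i j = 1) (N N' : ℕ) :
    riskDiff m n p N N' =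
      ∑ i, (∑ j, p i j) *
        (Real.log (((N + N' : ℕ) : ℝ) + (1 + m) * (1 + n) / 2) -
            Real.log ((N : ℝ) + (1 + m) * (1 + n) / 2) -
          binE (∑ j, p i j) (N + N') (fun z => Real.log ((z : ℝ) + (1 + n) / 2)) +
          binE (∑ j, p i j) N (fun z => Real.log ((z : ℝ) + (1 + n) / 2))) := by
  unfold riskDiff
  simp only [entropy_diff p hp, mul_sum]
  have comm : ∀ F : (Fin (m+1) → Fin (n+1) → Fin (N+1)) → (Fin (m+1) → Fin (N'+1)) →
      Fin (m+1) → ℝ, ∑ x ∈ suppX m n N, ∑ y ∈ suppY m N', ∑ i, F x y i =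
      ∑ i, ∑ x ∈ suppX m n N, ∑ y ∈ suppY m N', F x y i := by
    intro F
    exact (sum_congr rfl fun x _ => sum_comm).trans sum_comm
  rw [comm]
  refine sum_congr rfl fun i _ => ?_
  set L : ℕ → ℝ := fun z => Real.log ((z : ℝ) + (1 + n) / 2) with hL
  set c := Real.log (((N + N' : ℕ) : ℝ) + (1 + m) * (1 + n) / 2) -
            Real.log ((N : ℝ) + (1 + m) * (1 + n) / 2) with hc
  set q := ∑ j, p i j with hq
  have inner : ∀ x ∈ suppX m n N, ∑ y ∈ suppY m N', wX p x * wY p y *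
      (q * (c - L (∑ j, (x i j : ℕ) + (y i : ℕ)) + L (∑ j, (x i j : ℕ)))) =
      wX p x * (fun s : ℕ => q * c + q * L s + (-q) * binE q N' (fun z => L (s + z)))
        (∑ j, (x i j : ℕ)) := by
    intro x _
    generalize (∑ j, (x i j : ℕ)) = s
    have h := expY p hs N' i (fun z => (q * c + q * L s) + (-q) * L (s + z))
    rw [binE_add, binE_const, binE_smul] at h
    simp only
    rw [← h, mul_sum]
    refine sum_congr rfl fun y _ => ?_
    ring
  refine (sum_congr rfl inner).trans ((expX p hs N i
    (fun s : ℕ => q * c + q * L s + (-q) * binE q N' (fun z => L (s + z)))).trans ?_)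
  rw [binE_add, binE_add, binE_const, binE_smul, binE_smul, binE_semigroup]
  ring

lemma one_step {m n : ℕ} (hn : 3 ≤ n) (p : Fin (m+1) → Fin (n+1) → ℝ) (hp : ∀ i j, 0 < p i j)
    (hs : ∑ i, ∑ j, p i j = 1) (K : ℕ) :
    (1 - ((1 + m) * (1 + n) / 2 - (1 + m : ℝ) / 2) / (K + 2)) / (K + 1) ≤
      ∑ i, (∑ j, p i j) *
        (binE (∑ j, p i j) (K + 1) (fun z => Real.log ((z : ℝ) + (1 + n) / 2)) -
          binE (∑ j, p i j) K (fun z => Real.log ((z : ℝ) + (1 + n) / 2))) := by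
  have hn' : (3 : ℝ) ≤ n := by exact_mod_cast hn
  have q0 : ∀ i, 0 ≤ ∑ j, p i j := fun i => sum_nonneg fun j _ => (hp i j).le
  have q1 : ∀ i, ∑ j, p i j ≤ 1 := fun i => by
    rw [← hs]
    exact single_le_sum (f := fun i => ∑ j, p i j) (fun i _ => q0 i) (mem_univ i)
  have row : ∀ i, ((∑ j, p i j) - ((1 + n) / 2 + 1 / 2 - 1) / (K + 2)) / (K + 1) ≤
      (∑ j, p i j) *
        (binE (∑ j, p i j) (K + 1) (fun z => Real.log ((z : ℝ) + (1 + n) / 2)) -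
          binE (∑ j, p i j) K (fun z => Real.log ((z : ℝ) + (1 + n) / 2))) := by
    intro i
    have h0 := q0 i
    have h1 := q1 i
    generalize ∑ j, p i j = q at *
    refine (binE_inv_lower q h0 h1 K ((1 + n) / 2 + 1 / 2) (by linarith)).trans ?_
    refine mul_le_mul_of_nonneg_left ?_ h0
    have e : binE q (K + 1) (fun z => Real.log ((z : ℝ) + (1 + n) / 2)) -
        binE q K (fun z => Real.log ((z : ℝ) + (1 + n) / 2)) =
        q * binE q K (fun z => Real.log (((z + 1 : ℕ) : ℝ) + (1 + n) / 2) +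
          (-1) * Real.log ((z : ℝ) + (1 + n) / 2)) := by
      rw [binE_add, binE_smul, binE]; ring
    rw [e]
    refine mul_le_mul_of_nonneg_left ?_ h0
    apply binE_mono q h0 h1
    intro z
    have := log_lower ((z : ℝ) + (1 + n) / 2) (by positivity)
    push_cast
    rw [show (z : ℝ) + 1 + (1 + n) / 2 = z + (1 + n) / 2 + 1 by ring]
    rw [show (z : ℝ) + ((1 + n) / 2 + 1 / 2) = z + (1 + n) / 2 + 1 / 2 by ring]
    linarith
  refine le_trans (le_of_eq ?_) (sum_le_sum fun i _ => row i)
  rw [← sum_div, sum_sub_distrib, hs, sum_const, card_univ, Fintype.card_fin, nsmul_eq_mul]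
  push_cast
  ring

theorem dominance_large_direct_sample (m n N' : ℕ)
    (hm : 1 ≤ m) (hn : 3 ≤ n) (hN' : 1 ≤ N') :
    ∃ N₀ : ℕ, ∀ N : ℕ, N₀ ≤ N →
      ∀ p : Fin (m+1) → Fin (n+1) → ℝ, (∀ i j, 0 < p i j) →
        ∑ i, ∑ j, p i j = 1 → riskDiff m n p N N' < 0 := by
  have hm' : (1 : ℝ) ≤ m := by exact_mod_cast hm
  obtain ⟨K₀, hK₀⟩ := rate_bound (1 + m) ((1 + m) * (1 + n) / 2) (by linarith) (by positivity)
  refine ⟨K₀, fun N hN p hp hs => ?_⟩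
  have aux : ∀ t : ℝ, t = ∑ i, (∑ j, p i j) * t := fun t => by rw [← sum_mul, hs, one_mul]
  induction N', hN' using Nat.le_induction with
  | base =>
    rw [riskDiff_eq p hp hs]
    have h := (hK₀ N hN).trans_le (one_step hn p hp hs N)
    rw [aux (Real.log _ - _)] at h
    rw [← sub_pos, ← sum_sub_distrib] at h
    rw [← neg_pos, ← sum_neg_distrib]
    refine h.trans_le (le_of_eq (sum_congr rfl fun i _ => ?_))
    push_cast
    rw [add_right_comm (N : ℝ) 1]
    ring
  | succ N' _ ih =>
    rw [riskDiff_eq p hp hs] at ih ⊢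
    have h := (hK₀ (N + N') (by omega)).trans_le (one_step hn p hp hs (N + N'))
    rw [aux (Real.log _ - _)] at h
    rw [← sub_pos, ← sum_sub_distrib] at h
    rw [← neg_pos, ← sum_neg_distrib] at ih ⊢
    have h' := add_pos h ih
    rw [← sum_add_distrib] at h'
    refine h'.trans_le (le_of_eq (sum_congr rfl fun i _ => ?_))
    push_cast
    rw [← add_assoc (N : ℝ) N' 1, add_right_comm ((N : ℝ) + N') 1, ← add_assoc N N' 1]
    ring
end
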